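/- The hypotheses obs reduce to exch ∪ contr': the map r sending each letter a ∈ Σ to itself and each propositional term p ∈ T_BA to the sum of all atoms α with α ≦_BA p (where α ≦_BA p means α ∨ p ≡_BA p) is a reduction from obs to exch ∪ contr'. -/

import Mathlib

namespace CKAH

open Classical

/-! ### Labelled posets and pomsets -/

/-- A labelled poset over alphabet `A`: a finite carrier with a partial order and labelling. -/
structure LPoset (A : Type) : Type 1 where
  carrier : Type
  [fin : Fintype carrier]
  [ord : PartialOrder carrier]
  lab : carrier → A

attribute [instance] LPoset.fin LPoset.ord

/-- Isomorphism of labelled posets: an order isomorphism preserving labels. -/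
def LPoset.Iso {A : Type} (u v : LPoset A) : Prop :=
  ∃ e : u.carrier ≃o v.carrier, ∀ x, v.lab (e x) = u.lab x

theorem LPoset.iso_equivalence (A : Type) : Equivalence (LPoset.Iso (A := A)) where
  refl u := ⟨OrderIso.refl _, fun _ => rfl⟩
  symm := by
    rintro u v ⟨e, he⟩
    exact ⟨e.symm, fun x => by rw [← he (e.symm x), OrderIso.apply_symm_apply]⟩
  trans := by
    rintro u v w ⟨e, he⟩ ⟨f, hf⟩
    exact ⟨e.trans f, fun x => by rw [OrderIso.trans_apply, hf, he]⟩

instance pomSetoid (A : Type) : Setoid (LPoset A) := ⟨LPoset.Iso, LPoset.iso_equivalence A⟩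

/-- A pomset is an isomorphism class of labelled posets. -/
def Pomset (A : Type) : Type 1 := Quotient (pomSetoid A)

/-- Sequential composition of labelled posets: disjoint union, everything on the left
below everything on the right (lexicographic sum order). -/
def LPoset.seqL {A : Type} (u v : LPoset A) : LPoset A where
  carrier := u.carrier ⊕ₗ v.carrier
  fin := inferInstanceAs (Fintype (u.carrier ⊕ v.carrier))
  lab := fun x => Sum.elim u.lab v.lab (ofLex x)

/-- Parallel composition of labelled posets: disjoint union with no cross ordering. -/
def LPoset.parL {A : Type} (u v : LPoset A) : LPoset A where
  carrier := u.carrier ⊕ v.carrier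
  lab := Sum.elim u.lab v.lab

def Pomset.seq {A : Type} : Pomset A → Pomset A → Pomset A :=
  Quotient.map₂ LPoset.seqL (by
    rintro u₁ u₂ ⟨e, he⟩ v₁ v₂ ⟨f, hf⟩
    refine ⟨(RelIso.sumLexCongr e f :
      (u₁.carrier ⊕ₗ v₁.carrier) ≃o (u₂.carrier ⊕ₗ v₂.carrier)), ?_⟩
    rintro (x | x)
    · exact he x
    · exact hf x)

/-- Order isomorphism between disjoint-union orders, from component isomorphisms. -/
def sumOrderIso {α β γ δ : Type} [PartialOrder α] [PartialOrder β] [PartialOrder γ]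
    [PartialOrder δ] (e : α ≃o γ) (f : β ≃o δ) : (α ⊕ β) ≃o (γ ⊕ δ) where
  toEquiv := Equiv.sumCongr e.toEquiv f.toEquiv
  map_rel_iff' := by
    rintro (x | x) (y | y) <;> simp [Sum.le_def, e.le_iff_le, f.le_iff_le]

def Pomset.par {A : Type} : Pomset A → Pomset A → Pomset A :=
  Quotient.map₂ LPoset.parL (by
    rintro u₁ u₂ ⟨e, he⟩ v₁ v₂ ⟨f, hf⟩
    refine ⟨sumOrderIso e f, ?_⟩
    rintro (x | x)
    · exact he x
    · exact hf x)

def LPoset.emptyL (A : Type) : LPoset A := { carrier := Fin 0, lab := fun x => x.elim0 }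

def LPoset.singleL {A : Type} (a : A) : LPoset A := { carrier := PUnit, lab := fun _ => a }

/-- The empty pomset `1`. -/
def Pomset.empty (A : Type) : Pomset A := ⟦LPoset.emptyL A⟧

/-- The single-letter pomset. -/
def Pomset.single {A : Type} (a : A) : Pomset A := ⟦LPoset.singleL a⟧

/-- Subsumption on labelled posets: `u ⊑ v` iff there is a label-preserving
order-preserving bijection from the carrier of `v` to that of `u`. -/
def LPoset.subL {A : Type} (u v : LPoset A) : Prop :=
  ∃ h : v.carrier ≃ u.carrier,
    (∀ x, u.lab (h x) = v.lab x) ∧ ∀ x y : v.carrier, x ≤ y → h x ≤ h y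

/-- Subsumption of pomsets: `Pomset.sub U V` means `U ⊑ V`. -/
def Pomset.sub {A : Type} : Pomset A → Pomset A → Prop :=
  Quotient.lift₂ LPoset.subL (by
    rintro u₁ v₁ u₂ v₂ ⟨e, he⟩ ⟨f, hf⟩
    refine propext ⟨?_, ?_⟩
    · rintro ⟨h, hl, hm⟩
      refine ⟨(f.toEquiv.symm.trans h).trans e.toEquiv, fun x => ?_, fun x y hxy => ?_⟩
      · show u₂.lab (e (h (f.symm x))) = v₂.lab x
        rw [he, hl, ← hf (f.symm x), OrderIso.apply_symm_apply]
      · simp only [Equiv.trans_apply]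
        exact e.le_iff_le.mpr (hm _ _ (f.symm.le_iff_le.mpr hxy))
    · rintro ⟨h, hl, hm⟩
      refine ⟨(f.toEquiv.trans h).trans e.toEquiv.symm, fun x => ?_, fun x y hxy => ?_⟩
      · show u₁.lab (e.symm (h (f x))) = v₁.lab x
        rw [← he (e.symm (h (f x))), OrderIso.apply_symm_apply, hl, hf]
      · simp only [Equiv.trans_apply]
        exact e.symm.le_iff_le.mpr (hm _ _ (f.le_iff_le.mpr hxy)))

def LPoset.isWordL {A : Type} (u : LPoset A) : Prop := ∀ x y : u.carrier, x ≤ y ∨ y ≤ x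

/-- A pomset is a word when it is totally ordered. -/
def Pomset.IsWord {A : Type} : Pomset A → Prop :=
  Quotient.lift LPoset.isWordL (by
    rintro u v ⟨e, -⟩
    refine propext ⟨fun h x y => ?_, fun h x y => ?_⟩
    · rcases h (e.symm x) (e.symm y) with h' | h'
      · exact Or.inl (e.symm.le_iff_le.mp h')
      · exact Or.inr (e.symm.le_iff_le.mp h')
    · rcases h (e x) (e y) with h' | h'
      · exact Or.inl (e.le_iff_le.mp h')
      · exact Or.inr (e.le_iff_le.mp h'))

def LPoset.mapL {A B : Type} (f : A → B) (u : LPoset A) : LPoset B :=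
  { carrier := u.carrier, lab := f ∘ u.lab }

/-- Relabelling of pomsets along a function on letters. -/
def Pomset.map {A B : Type} (f : A → B) : Pomset A → Pomset B :=
  Quotient.map (LPoset.mapL f)
    (by rintro u v ⟨e, he⟩; exact ⟨e, fun x => congrArg f (he x)⟩)

def LPoset.overL {A : Type} (Γ : Set A) (u : LPoset A) : Prop := ∀ x, u.lab x ∈ Γ

/-- All labels of the pomset belong to `Γ`. -/
def Pomset.Over {A : Type} (Γ : Set A) : Pomset A → Prop :=
  Quotient.lift (LPoset.overL Γ) (by
    rintro u v ⟨e, he⟩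
    refine propext ⟨fun h x => ?_, fun h x => ?_⟩
    · have h2 := he (e.symm x)
      rw [OrderIso.apply_symm_apply] at h2
      rw [h2]; exact h _
    · rw [← he x]; exact h _)

/-- Series-parallel pomsets. -/
inductive Pomset.IsSP {A : Type} : Pomset A → Prop
  | empty : Pomset.IsSP (Pomset.empty A)
  | single (a : A) : Pomset.IsSP (Pomset.single a)
  | seq {U V : Pomset A} : Pomset.IsSP U → Pomset.IsSP V → Pomset.IsSP (Pomset.seq U V)
  | par {U V : Pomset A} : Pomset.IsSP U → Pomset.IsSP V → Pomset.IsSP (Pomset.par U V)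

def SPset (A : Type) : Set (Pomset A) := {U | U.IsSP}

/-! ### Pomset contexts -/

/-- Contexts are pomsets over `Option A`, where `none` plays the role of `*`.
`uniqueStarL` says there is exactly one `*`-labelled node. -/
def LPoset.uniqueStarL {A : Type} (c : LPoset (Option A)) : Prop := ∃! x, c.lab x = none

theorem LPoset.uniqueStarL_congr {A : Type} {u v : LPoset (Option A)}
    (e : u.carrier ≃o v.carrier) (he : ∀ x, v.lab (e x) = u.lab x) :
    u.uniqueStarL ↔ v.uniqueStarL := by
  constructor
  · rintro ⟨x, hx, hux⟩
    refine ⟨e x, show v.lab (e x) = none by rw [he]; exact hx, fun y hy => ?_⟩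
    have h2 := he (e.symm y)
    rw [OrderIso.apply_symm_apply] at h2
    have h3 : e.symm y = x := hux _ (h2.symm.trans hy)
    rw [← h3, OrderIso.apply_symm_apply]
  · rintro ⟨x, hx, hvx⟩
    refine ⟨e.symm x, ?_, fun y hy => ?_⟩
    · show u.lab (e.symm x) = none
      have h2 := he (e.symm x)
      rw [OrderIso.apply_symm_apply] at h2
      rw [← h2]; exact hx
    · have h3 : e y = x := hvx _ (show v.lab (e y) = none by rw [he]; exact hy)
      rw [← h3, OrderIso.symm_apply_apply]

/-- A pomset context: exactly one node labelled `*`. -/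
def Pomset.IsCtx {A : Type} : Pomset (Option A) → Prop :=
  Quotient.lift LPoset.uniqueStarL
    (fun _ _ h => propext (LPoset.uniqueStarL_congr h.choose h.choose_spec))

/-- Series-parallel pomset contexts. -/
def Pomset.IsSPCtx {A : Type} (C : Pomset (Option A)) : Prop := C.IsCtx ∧ C.IsSP

/-- Sequential (totally ordered) pomset contexts. -/
def Pomset.IsSeqCtx {A : Type} (C : Pomset (Option A)) : Prop := C.IsCtx ∧ C.IsWord

/-- The trivial context `*`. -/
def starCtx (A : Type) : Pomset (Option A) := Pomset.single (none : Option A)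

theorem option_get_eq_get {α : Type} {o₁ o₂ : Option α} (h : o₁ = o₂) (h₁ : o₁.isSome)
    (h₂ : o₂.isSome) : o₁.get h₁ = o₂.get h₂ := by subst h; rfl

/-- The order of `C[U]`: the orders of `C` (restricted away from `*`) and of `U`, with a
point of `C` below (resp. above) all of `U` when it is below (resp. above) the unique
`*`-node of `C`.  (For well-definedness of the order, the cross-relations are guarded by
the requirement that the star node is unique, which holds for every genuine context.) -/
def LPoset.insLe {A : Type} (c : LPoset (Option A)) (u : LPoset A) :
    ({x : c.carrier // c.lab x ≠ none} ⊕ u.carrier) →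
    ({x : c.carrier // c.lab x ≠ none} ⊕ u.carrier) → Prop
  | Sum.inl x, Sum.inl y => x.val ≤ y.val
  | Sum.inr x, Sum.inr y => x ≤ y
  | Sum.inl x, Sum.inr _ => c.uniqueStarL ∧ ∃ s, c.lab s = none ∧ x.val ≤ s
  | Sum.inr _, Sum.inl y => c.uniqueStarL ∧ ∃ s, c.lab s = none ∧ s ≤ y.val

/-- Insertion of a labelled poset `u` into the gap of a context `c`: the `*`-labelled
node is removed and `u` is put in its place, inheriting the order relations of `*`. -/
noncomputable def LPoset.insL {A : Type} (c : LPoset (Option A)) (u : LPoset A) :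
    LPoset A where
  carrier := {x : c.carrier // c.lab x ≠ none} ⊕ u.carrier
  fin := by classical exact inferInstance
  ord :=
    { le := LPoset.insLe c u
      lt := fun p q => LPoset.insLe c u p q ∧ ¬ LPoset.insLe c u q p
      lt_iff_le_not_ge := fun _ _ => Iff.rfl
      le_refl := by rintro (x | x) <;> exact le_refl _
      le_trans := by
        rintro (x | x) (y | y) (z | z) h1 h2
        · exact le_trans h1 h2
        · obtain ⟨hu, s, hs, hys⟩ := h2
          exact ⟨hu, s, hs, le_trans h1 hys⟩
        · obtain ⟨hu, s, hs, hxs⟩ := h1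
          obtain ⟨-, t, ht, htz⟩ := h2
          obtain ⟨w, hw, huniq⟩ := hu
          have hst : s = t := (huniq s hs).trans (huniq t ht).symm
          exact le_trans (hst ▸ hxs) htz
        · exact h1
        · obtain ⟨hu, s, hs, hsy⟩ := h1
          exact ⟨hu, s, hs, le_trans hsy h2⟩
        · obtain ⟨hu, s, hs, hsy⟩ := h1
          obtain ⟨-, t, ht, hyt⟩ := h2
          obtain ⟨w, hw, huniq⟩ := hu
          have hst : s = t := (huniq s hs).trans (huniq t ht).symm
          have hy : y.val = s := le_antisymm (hst.symm ▸ hyt) hsy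
          exact absurd (hy.symm ▸ hs) y.prop
        · exact h2
        · exact le_trans h1 h2
      le_antisymm := by
        rintro (x | x) (y | y) h1 h2
        · exact congrArg Sum.inl (Subtype.ext (le_antisymm h1 h2))
        · obtain ⟨hu, s, hs, hxs⟩ := h1
          obtain ⟨-, t, ht, htx⟩ := h2
          obtain ⟨w, hw, huniq⟩ := hu
          have hst : s = t := (huniq s hs).trans (huniq t ht).symm
          have hx : x.val = s := le_antisymm hxs (hst.symm ▸ htx)
          exact absurd (hx.symm ▸ hs) x.prop
        · obtain ⟨hu, s, hs, hsy⟩ := h1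
          obtain ⟨-, t, ht, hyt⟩ := h2
          obtain ⟨w, hw, huniq⟩ := hu
          have hst : s = t := (huniq s hs).trans (huniq t ht).symm
          have hy : y.val = s := le_antisymm (hst.symm ▸ hyt) hsy
          exact absurd (hy.symm ▸ hs) y.prop
        · exact congrArg Sum.inr (le_antisymm h1 h2) }
  lab := Sum.elim (fun x => (c.lab x.val).get (Option.isSome_iff_ne_none.mpr x.prop)) u.lab

/-- `Pomset.ins C U` is `C[U]`: plugging the pomset `U` into the gap of the context `C`. -/
noncomputable def Pomset.ins {A : Type} : Pomset (Option A) → Pomset A → Pomset A :=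
  Quotient.map₂ LPoset.insL (by
    rintro c₁ c₂ ⟨e, he⟩ u₁ u₂ ⟨f, hf⟩
    have hstar : c₁.uniqueStarL ↔ c₂.uniqueStarL := LPoset.uniqueStarL_congr e he
    refine ⟨{ toEquiv := Equiv.sumCongr
                (e.toEquiv.subtypeEquiv fun x => by
                  rw [show c₂.lab (e.toEquiv x) = c₁.lab x from he x]) f.toEquiv
              map_rel_iff' := ?_ }, ?_⟩
    · rintro (x | x) (y | y)
      · exact e.le_iff_le
      · show (c₂.uniqueStarL ∧ ∃ s, c₂.lab s = none ∧ (e x.val : c₂.carrier) ≤ s) ↔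
             (c₁.uniqueStarL ∧ ∃ s, c₁.lab s = none ∧ x.val ≤ s)
        constructor
        · rintro ⟨hu, s, hs, hxs⟩
          refine ⟨hstar.mpr hu, e.symm s, ?_, ?_⟩
          · have h2 := he (e.symm s)
            rw [OrderIso.apply_symm_apply] at h2
            rw [← h2]; exact hs
          · exact e.le_iff_le.mp (by rw [OrderIso.apply_symm_apply]; exact hxs)
        · rintro ⟨hu, s, hs, hxs⟩
          exact ⟨hstar.mp hu, e s, by rw [he]; exact hs, e.le_iff_le.mpr hxs⟩
      · show (c₂.uniqueStarL ∧ ∃ s, c₂.lab s = none ∧ s ≤ (e y.val : c₂.carrier)) ↔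
             (c₁.uniqueStarL ∧ ∃ s, c₁.lab s = none ∧ s ≤ y.val)
        constructor
        · rintro ⟨hu, s, hs, hsy⟩
          refine ⟨hstar.mpr hu, e.symm s, ?_, ?_⟩
          · have h2 := he (e.symm s)
            rw [OrderIso.apply_symm_apply] at h2
            rw [← h2]; exact hs
          · exact e.le_iff_le.mp (by rw [OrderIso.apply_symm_apply]; exact hsy)
        · rintro ⟨hu, s, hs, hsy⟩
          exact ⟨hstar.mp hu, e s, by rw [he]; exact hs, e.le_iff_le.mpr hsy⟩
      · exact f.le_iff_le
    · rintro (x | x)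
      · exact option_get_eq_get (he x.val) _ _
      · exact hf x)

/-! ### Pomset languages -/

abbrev Lang (A : Type) := Set (Pomset A)

def Lang.seq {A : Type} (L K : Lang A) : Lang A :=
  {W | ∃ U ∈ L, ∃ V ∈ K, W = Pomset.seq U V}

def Lang.par {A : Type} (L K : Lang A) : Lang A :=
  {W | ∃ U ∈ L, ∃ V ∈ K, W = Pomset.par U V}

def Lang.pow {A : Type} (L : Lang A) : ℕ → Lang A
  | 0 => {Pomset.empty A}
  | n + 1 => Lang.seq (Lang.pow L n) L

def Lang.star {A : Type} (L : Lang A) : Lang A := ⋃ n, L.pow n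

/-- Application of a context to a language: `C[L] = {C[U] : U ∈ L}`. -/
def Ctx.img {A : Type} (C : Pomset (Option A)) (L : Lang A) : Lang A :=
  {W | ∃ U ∈ L, W = C.ins U}

/-! ### CKA terms and semantics -/

inductive Term (A : Type) : Type
  | zero : Term A
  | one : Term A
  | var : A → Term A
  | add : Term A → Term A → Term A
  | seq : Term A → Term A → Term A
  | par : Term A → Term A → Term A
  | star : Term A → Term A

/-- Pomset language semantics of CKA terms. -/
def Term.lang {A : Type} : Term A → Lang A
  | .zero => ∅
  | .one => {Pomset.empty A}
  | .var a => {Pomset.single a}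
  | .add e f => e.lang ∪ f.lang
  | .seq e f => Lang.seq e.lang f.lang
  | .par e f => Lang.par e.lang f.lang
  | .star e => Lang.star e.lang

/-- Sets of hypotheses: a hypothesis `e ≤ f` is the pair `(e, f)`. -/
abbrev HypSet (A : Type) := Set (Term A × Term A)

/-- The congruence `≡^H` on CKA terms generated by the CKA axioms and the hypotheses `H`
(the constructor `hyp` encodes `e ≦^H f`, i.e. `e + f ≡^H f`, for `e ≤ f ∈ H`). -/
inductive CongH {A : Type} (H : HypSet A) : Term A → Term A → Prop
  | refl (e) : CongH H e e
  | symm {e f} : CongH H e f → CongH H f e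
  | trans {e f g} : CongH H e f → CongH H f g → CongH H e g
  | addCong {e e' f f'} : CongH H e e' → CongH H f f' → CongH H (.add e f) (.add e' f')
  | seqCong {e e' f f'} : CongH H e e' → CongH H f f' → CongH H (.seq e f) (.seq e' f')
  | parCong {e e' f f'} : CongH H e e' → CongH H f f' → CongH H (.par e f) (.par e' f')
  | starCong {e e'} : CongH H e e' → CongH H (.star e) (.star e')
  | addZero (e) : CongH H (.add e .zero) e
  | addIdem (e) : CongH H (.add e e) e
  | addComm (e f) : CongH H (.add e f) (.add f e)
  | addAssoc (e f g) : CongH H (.add e (.add f g)) (.add (.add e f) g)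
  | seqAssoc (e f g) : CongH H (.seq e (.seq f g)) (.seq (.seq e f) g)
  | seqDistL (e f g) : CongH H (.seq e (.add f g)) (.add (.seq e f) (.seq e g))
  | seqDistR (e f g) : CongH H (.seq (.add e f) g) (.add (.seq e g) (.seq f g))
  | seqOneR (e) : CongH H (.seq e .one) e
  | seqOneL (e) : CongH H (.seq .one e) e
  | seqZeroR (e) : CongH H (.seq e .zero) .zero
  | seqZeroL (e) : CongH H (.seq .zero e) .zero
  | parComm (e f) : CongH H (.par e f) (.par f e)
  | parOne (e) : CongH H (.par e .one) e
  | parZero (e) : CongH H (.par e .zero) .zero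
  | parAssoc (e f g) : CongH H (.par e (.par f g)) (.par (.par e f) g)
  | parDist (e f g) : CongH H (.par e (.add f g)) (.add (.par e f) (.par e g))
  | starUnfoldL (e) : CongH H (.add .one (.seq e (.star e))) (.star e)
  | starUnfoldR (e) : CongH H (.add .one (.seq (.star e) e)) (.star e)
  | lfpL {e f g} : CongH H (.add (.add e (.seq f g)) g) g →
      CongH H (.add (.seq (.star f) e) g) g
  | lfpR {e f g} : CongH H (.add (.add e (.seq f g)) f) f →
      CongH H (.add (.seq e (.star g)) f) f
  | hyp {e f} : (e, f) ∈ H → CongH H (.add e f) f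

/-- `e ≦^H f`, the natural order `e + f ≡^H f`. -/
def LeH {A : Type} (H : HypSet A) (e f : Term A) : Prop := CongH H (.add e f) f

/-- The `H`-closure of a pomset language, as an inductive predicate: the smallest language
containing `L` such that for all `e ≤ f ∈ H` and series-parallel contexts `C`,
if `C[⟦f⟧] ⊆ cl` then `C[⟦e⟧] ⊆ cl`. -/
inductive closure {A : Type} (H : HypSet A) (L : Lang A) : Pomset A → Prop
  | base {U} : U ∈ L → closure H L U
  | step {e f : Term A} (hef : (e, f) ∈ H) {C : Pomset (Option A)} (hC : C.IsSPCtx)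
      (hf : ∀ V ∈ f.lang, closure H L (C.ins V)) {U} (hU : U ∈ e.lang) :
      closure H L (C.ins U)

/-- `cl H L` is the `H`-closure of `L`. -/
def cl {A : Type} (H : HypSet A) (L : Lang A) : Lang A := {U | closure H L U}

/-- The sequential closure: like `cl` but only sequential contexts are used. -/
inductive seqClosure {A : Type} (H : HypSet A) (L : Lang A) : Pomset A → Prop
  | base {U} : U ∈ L → seqClosure H L U
  | step {e f : Term A} (hef : (e, f) ∈ H) {C : Pomset (Option A)} (hC : C.IsSeqCtx)
      (hf : ∀ V ∈ f.lang, seqClosure H L (C.ins V)) {U} (hU : U ∈ e.lang) :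
      seqClosure H L (C.ins U)

def seqCl {A : Type} (H : HypSet A) (L : Lang A) : Lang A := {U | seqClosure H L U}

/-! ### Implication, completeness, reductions -/

/-- `H` implies `H'`: every hypothesis of `H'` is derivable from `H`. -/
def Implies {A : Type} (H H' : HypSet A) : Prop := ∀ p ∈ H', LeH H p.1 p.2

/-- `H` is complete: semantic equivalence implies axiomatic equivalence. -/
def Complete {A : Type} (H : HypSet A) : Prop :=
  ∀ e f : Term A, cl H e.lang = cl H f.lang → CongH H e f

/-- A reduction from `H` to `H'` (presupposing that `H` implies `H'`). -/
structure IsReduction {A : Type} (H H' : HypSet A) (r : Term A → Term A) : Prop where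
  implies : Implies H H'
  equiv : ∀ e, CongH H e (r e)
  reflect : ∀ e f : Term A, cl H e.lang = cl H f.lang → cl H' (r e).lang = cl H' (r f).lang

def Reduces {A : Type} (H H' : HypSet A) : Prop := ∃ r, IsReduction H H' r

/-- A strong reduction from `H` to `H'`. -/
structure IsStrongReduction {A : Type} (H H' : HypSet A) (r : Term A → Term A)
    extends IsReduction H H' r : Prop where
  strong : ∀ e : Term A, cl H e.lang = cl H' (r e).lang

def StronglyReduces {A : Type} (H H' : HypSet A) : Prop := ∃ r, IsStrongReduction H H' r

/-- `H` factorises into `H₀` and `H₁`. -/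
def Factorises {A : Type} (H H₀ H₁ : HypSet A) : Prop :=
  Implies H H₀ ∧ Implies H H₁ ∧ ∀ L : Lang A, L ⊆ SPset A → cl H L = cl H₁ (cl H₀ L)

/-! ### The exchange hypotheses and sp-subsumption -/

/-- The exchange hypotheses `(e∥f)·(g∥h) ≤ (e·g)∥(f·h)`. -/
def exch (A : Type) : HypSet A :=
  {p | ∃ e f g h : Term A,
    p = (Term.seq (.par e f) (.par g h), Term.par (.seq e g) (.seq f h))}

/-- `⊑^sp`: the smallest precongruence on series-parallel pomsets satisfying the
exchange inequality. -/
inductive spSub {A : Type} : Pomset A → Pomset A → Prop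
  | refl {U : Pomset A} : U.IsSP → spSub U U
  | trans {U V W} : spSub U V → spSub V W → spSub U W
  | seqCong {U V U' V'} : spSub U V → spSub U' V' → spSub (Pomset.seq U U') (Pomset.seq V V')
  | parCong {U V U' V'} : spSub U V → spSub U' V' → spSub (Pomset.par U U') (Pomset.par V V')
  | exch {U V W X : Pomset A} : U.IsSP → V.IsSP → W.IsSP → X.IsSP →
      spSub (Pomset.seq (Pomset.par U V) (Pomset.par W X))
            (Pomset.par (Pomset.seq U W) (Pomset.seq V X))

/-! ### KA terms, grounded hypotheses, sequential reductions -/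

/-- A term is a KA term when it contains no `∥`. -/
def Term.noPar {A : Type} : Term A → Prop
  | .zero => True
  | .one => True
  | .var _ => True
  | .add e f => e.noPar ∧ f.noPar
  | .seq e f => e.noPar ∧ f.noPar
  | .par _ _ => False
  | .star e => e.noPar

/-- A non-empty word. -/
def IsNonemptyWord {A : Type} (W : Pomset A) : Prop := W.IsWord ∧ W ≠ Pomset.empty A

/-- A set of hypotheses is grounded when in each hypothesis `e ≤ f`, `e` is a KA term and
`⟦f⟧ = {W}` for a non-empty word `W`. -/
def Grounded {A : Type} (H : HypSet A) : Prop :=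
  ∀ p ∈ H, p.1.noPar ∧ ∃ W : Pomset A, IsNonemptyWord W ∧ p.2.lang = {W}

/-- `≡_KA^H`: the congruence on terms generated by the axioms of `≡` not involving `∥`
together with the hypotheses of `H`. -/
inductive KACong {A : Type} (H : HypSet A) : Term A → Term A → Prop
  | refl (e) : KACong H e e
  | symm {e f} : KACong H e f → KACong H f e
  | trans {e f g} : KACong H e f → KACong H f g → KACong H e g
  | addCong {e e' f f'} : KACong H e e' → KACong H f f' → KACong H (.add e f) (.add e' f')
  | seqCong {e e' f f'} : KACong H e e' → KACong H f f' → KACong H (.seq e f) (.seq e' f')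
  | starCong {e e'} : KACong H e e' → KACong H (.star e) (.star e')
  | addZero (e) : KACong H (.add e .zero) e
  | addIdem (e) : KACong H (.add e e) e
  | addComm (e f) : KACong H (.add e f) (.add f e)
  | addAssoc (e f g) : KACong H (.add e (.add f g)) (.add (.add e f) g)
  | seqAssoc (e f g) : KACong H (.seq e (.seq f g)) (.seq (.seq e f) g)
  | seqDistL (e f g) : KACong H (.seq e (.add f g)) (.add (.seq e f) (.seq e g))
  | seqDistR (e f g) : KACong H (.seq (.add e f) g) (.add (.seq e g) (.seq f g))
  | seqOneR (e) : KACong H (.seq e .one) e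
  | seqOneL (e) : KACong H (.seq .one e) e
  | seqZeroR (e) : KACong H (.seq e .zero) .zero
  | seqZeroL (e) : KACong H (.seq .zero e) .zero
  | starUnfoldL (e) : KACong H (.add .one (.seq e (.star e))) (.star e)
  | starUnfoldR (e) : KACong H (.add .one (.seq (.star e) e)) (.star e)
  | lfpL {e f g} : KACong H (.add (.add e (.seq f g)) g) g →
      KACong H (.add (.seq (.star f) e) g) g
  | lfpR {e f g} : KACong H (.add (.add e (.seq f g)) f) f →
      KACong H (.add (.seq e (.star g)) f) f
  | hyp {e f} : (e, f) ∈ H → KACong H (.add e f) f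

/-- A sequential reduction from `H` to `H'`. -/
structure IsSeqReduction {A : Type} (H H' : HypSet A) (r : Term A → Term A) : Prop where
  implies : Implies H H'
  equiv : ∀ e : Term A, e.noPar → KACong H e (r e)
  closure_eq : ∀ e : Term A, e.noPar → seqCl H e.lang = seqCl H' (r e).lang

/-- Extension of a map on (KA) terms to all CKA terms, homomorphically on `∥`. -/
def parExt {A : Type} (r : Term A → Term A) : Term A → Term A
  | .par e f => .par (parExt r e) (parExt r f)
  | e => r e

/-! ### Inductive characterisation of sp contexts -/

/-- The generators of series-parallel contexts (Lemma: `PC^sp` is the smallest such set). -/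
inductive GenCtx {A : Type} : Pomset (Option A) → Prop
  | star : GenCtx (Pomset.single (none : Option A))
  | seqL {U : Pomset A} {C} : U.IsSP → GenCtx C → GenCtx (Pomset.seq (Pomset.map some U) C)
  | seqR {C} {V : Pomset A} : GenCtx C → V.IsSP → GenCtx (Pomset.seq C (Pomset.map some V))
  | par {U : Pomset A} {C} : U.IsSP → GenCtx C → GenCtx (Pomset.par (Pomset.map some U) C)

/-! ### Reification -/

/-- Homomorphic extension of a letter map to terms. -/
def rTerm {A : Type} (r : A → Term A) : Term A → Term A
  | .zero => .zero
  | .one => .one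
  | .var a => r a
  | .add e f => .add (rTerm r e) (rTerm r f)
  | .seq e f => .seq (rTerm r e) (rTerm r f)
  | .par e f => .par (rTerm r e) (rTerm r f)
  | .star e => .star (rTerm r e)

/-- All letters of a term lie in `Γ`. -/
def TermOver {A : Type} (Γ : Set A) : Term A → Prop
  | .zero => True
  | .one => True
  | .var a => a ∈ Γ
  | .add e f => TermOver Γ e ∧ TermOver Γ f
  | .seq e f => TermOver Γ e ∧ TermOver Γ f
  | .par e f => TermOver Γ e ∧ TermOver Γ f
  | .star e => TermOver Γ e

/-- Extension of a letter map `r` to (series-parallel) pomsets, as a relation: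
`rMap r U V` means `V ∈ r(U)`. -/
inductive rMap {A : Type} (r : A → Term A) : Pomset A → Pomset A → Prop
  | one : rMap r (Pomset.empty A) (Pomset.empty A)
  | var (a : A) {V} : V ∈ (r a).lang → rMap r (Pomset.single a) V
  | seq {U U' V V'} : rMap r U V → rMap r U' V' →
      rMap r (Pomset.seq U U') (Pomset.seq V V')
  | par {U U' V V'} : rMap r U V → rMap r U' V' →
      rMap r (Pomset.par U U') (Pomset.par V V')

/-- Image of a language under (the pomset extension of) `r`. -/
def rImg {A : Type} (r : A → Term A) (L : Lang A) : Lang A := {V | ∃ U ∈ L, rMap r U V}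

/-- Series-parallel pomsets over the subalphabet `Γ`. -/
def SPover {A : Type} (Γ : Set A) : Lang A := {U | U.IsSP ∧ U.Over Γ}

/-- `r : Σ → Term Γ` is a reification from `H` to `H'`. -/
structure IsReification {A : Type} (Γ : Set A) (H H' : HypSet A) (r : A → Term A) : Prop where
  toGamma : ∀ a : A, TermOver Γ (r a)
  equiv : ∀ a : A, CongH H (r a) (.var a)
  expansive : ∀ a ∈ Γ, LeH (∅ : HypSet A) (.var a) (r a)
  preserves : ∀ L : Lang A, L ⊆ SPover Γ → cl H' L ⊆ SPover Γ
  hyps : ∀ p ∈ H, LeH H' (rTerm r p.1) (rTerm r p.2)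

end CKAH

namespace CKAH

/-! ### Boolean observations and CKAO -/

open scoped Classical

/-- Propositional (Boolean) terms over primitive observations `Ω`. -/
inductive BATerm (Ω : Type) : Type
  | bot : BATerm Ω
  | top : BATerm Ω
  | var : Ω → BATerm Ω
  | or : BATerm Ω → BATerm Ω → BATerm Ω
  | and : BATerm Ω → BATerm Ω → BATerm Ω
  | not : BATerm Ω → BATerm Ω

/-- The congruence `≡_BA` generated by the Boolean algebra axioms. -/
inductive BACong {Ω : Type} : BATerm Ω → BATerm Ω → Prop
  | refl (p) : BACong p p
  | symm {p q} : BACong p q → BACong q p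
  | trans {p q r} : BACong p q → BACong q r → BACong p r
  | orCong {p p' q q'} : BACong p p' → BACong q q' → BACong (.or p q) (.or p' q')
  | andCong {p p' q q'} : BACong p p' → BACong q q' → BACong (.and p q) (.and p' q')
  | notCong {p p'} : BACong p p' → BACong (.not p) (.not p')
  | orBot (p) : BACong (.or p .bot) p
  | orComm (p q) : BACong (.or p q) (.or q p)
  | orNot (p) : BACong (.or p (.not p)) .top
  | orAssoc (p q r) : BACong (.or p (.or q r)) (.or (.or p q) r)
  | andTop (p) : BACong (.and p .top) p
  | andComm (p q) : BACong (.and p q) (.and q p)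
  | andNot (p) : BACong (.and p (.not p)) .bot
  | andAssoc (p q r) : BACong (.and p (.and q r)) (.and (.and p q) r)
  | orAndDist (p q r) : BACong (.or p (.and q r)) (.and (.or p q) (.or p r))
  | andOrDist (p q r) : BACong (.and p (.or q r)) (.or (.and p q) (.and p r))

/-- `p ≦_BA q` iff `p ∨ q ≡_BA q`. -/
def leBA {Ω : Type} (p q : BATerm Ω) : Prop := BACong (BATerm.or p q) q

/-- The canonical propositional term of an atom `α ∈ 2^Ω`. -/
noncomputable def atomTerm {Ω : Type} [Fintype Ω] (α : Ω → Bool) : BATerm Ω :=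
  (Finset.univ : Finset Ω).toList.foldr
    (fun o t => BATerm.and (if α o then BATerm.var o else BATerm.not (BATerm.var o)) t)
    BATerm.top

/-- CKAO letters: program actions from `S` or propositional terms over `Ω`. -/
abbrev OLet (S Ω : Type) : Type := S ⊕ BATerm Ω

/-- The hypotheses `bool`: `p = q` whenever `p ≡_BA q`. -/
def boolHyp (S Ω : Type) : HypSet (OLet S Ω) :=
  {x | ∃ p q : BATerm Ω, BACong p q ∧ x = (Term.var (Sum.inr p), Term.var (Sum.inr q))}

/-- The hypotheses `contr`: `p ∧ q ≤ p · q`. -/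
def contrHyp (S Ω : Type) : HypSet (OLet S Ω) :=
  {x | ∃ p q : BATerm Ω,
    x = (Term.var (Sum.inr (BATerm.and p q)),
         Term.seq (Term.var (Sum.inr p)) (Term.var (Sum.inr q)))}

/-- The hypotheses `glue`: `0 = ⊥` and `p + q = p ∨ q`. -/
def glueHyp (S Ω : Type) : HypSet (OLet S Ω) :=
  {(Term.zero, Term.var (Sum.inr BATerm.bot)), (Term.var (Sum.inr BATerm.bot), Term.zero)} ∪
  {x | ∃ p q : BATerm Ω,
    x = (Term.add (Term.var (Sum.inr p)) (Term.var (Sum.inr q)),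
         Term.var (Sum.inr (BATerm.or p q))) ∨
    x = (Term.var (Sum.inr (BATerm.or p q)),
         Term.add (Term.var (Sum.inr p)) (Term.var (Sum.inr q)))}

/-- The hypotheses of CKAO: `obs = bool ∪ contr ∪ exch ∪ glue`. -/
def obsHyp (S Ω : Type) : HypSet (OLet S Ω) :=
  boolHyp S Ω ∪ contrHyp S Ω ∪ exch (OLet S Ω) ∪ glueHyp S Ω

/-- The hypotheses `contr' = {α ≤ α·α : α ∈ At}`. -/
noncomputable def contr'Hyp (S Ω : Type) [Fintype Ω] : HypSet (OLet S Ω) :=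
  {x | ∃ α : Ω → Bool,
    x = (Term.var (Sum.inr (atomTerm α)),
         Term.seq (Term.var (Sum.inr (atomTerm α))) (Term.var (Sum.inr (atomTerm α))))}

/-- The letter map of the reification: each action is mapped to itself, each
propositional term `p` to the sum of all atoms `α` with `α ≦_BA p`. -/
noncomputable def obsR (S Ω : Type) [Fintype Ω] [DecidableEq Ω] :
    OLet S Ω → Term (OLet S Ω)
  | Sum.inl a => Term.var (Sum.inl a)
  | Sum.inr p =>
    ((Finset.univ : Finset (Ω → Bool)).filter (fun α => leBA (atomTerm α) p)).toList.foldr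
      (fun α t => Term.add (Term.var (Sum.inr (atomTerm α))) t) Term.zero

end CKAH

/-!
The map `r` replaces each letter by a sum of letters, so `⟦r(e)⟧` arises from `⟦e⟧` by relabelling
nodes along a relation. Relabelling commutes with the pomset operations and with insertion into
contexts, so a derivation of `U ∈ cl_obs(L)` turns into derivations for all relabellings of `U`,
provided that the image of every hypothesis of `obs` holds, in every context, up to
`exch ∪ contr'`-closure. For `bool` and `glue` the two images are equal, because `⟦r(p)⟧` depends
only on the atoms satisfying `p`; the image of `p ∧ q ≤ p · q` follows from the hypotheses
`α ≤ α · α` for the atoms `α` below both `p` and `q`; and `exch` is closed under substitution.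

That `e ≡ r(e)` modulo `obs` is disjunctive normal form: an identity of Boolean terms is provable
when it holds in the Lindenbaum algebra, so the normal form need only be computed in an arbitrary
Boolean algebra.
-/

namespace CKAH

/-! ### Relabelling pomsets along a relation -/

section Relabelling

variable {A B : Type} {P : A → B → Prop}

/-- The isomorphism class of a labelled poset. -/
abbrev LPoset.toPomset (u : LPoset A) : Pomset A := ⟦u⟧

@[elab_as_elim, induction_eliminator]
theorem Pomset.ind {motive : Pomset A → Prop} (mk : ∀ u : LPoset A, motive u.toPomset)
    (U : Pomset A) : motive U :=
  Quotient.ind mk U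

/-- The labelled poset with the same carrier and order as `u`, and the labelling `l`. -/
def LPoset.relabel (u : LPoset A) (l : u.carrier → B) : LPoset B where
  carrier := u.carrier
  lab := l

/-- The lifting of a relation `P` on letters to pomsets: `Pomset.Rel P U V` holds when `V` arises
from `U` by replacing each label `a` by some `b` with `P a b`, independently at every node. -/
def Pomset.Rel (P : A → B → Prop) (U : Pomset A) (V : Pomset B) : Prop :=
  ∃ (u : LPoset A) (l : u.carrier → B),
    (∀ x, P (u.lab x) (l x)) ∧ u.toPomset = U ∧ (u.relabel l).toPomset = V

namespace Pomset

theorem rel_toPomset_iff {u : LPoset A} {V : Pomset B} :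
    Rel P u.toPomset V ↔
      ∃ l : u.carrier → B, (∀ x, P (u.lab x) (l x)) ∧ (u.relabel l).toPomset = V := by
  constructor
  · rintro ⟨u', l, hl, hu, rfl⟩
    obtain ⟨e, he⟩ : LPoset.Iso u u' := Quotient.exact hu.symm
    exact ⟨l ∘ e, fun x => he x ▸ hl (e x), Quotient.sound ⟨e, fun _ => rfl⟩⟩
  · rintro ⟨l, hl, rfl⟩
    exact ⟨u, l, hl, rfl, rfl⟩

theorem rel_empty_iff {V : Pomset B} : Rel P (Pomset.empty A) V ↔ V = Pomset.empty B := by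
  have relabel_empty (l : (LPoset.emptyL A).carrier → B) :
      ((LPoset.emptyL A).relabel l).toPomset = Pomset.empty B :=
    Quotient.sound ⟨OrderIso.refl (Fin 0), fun x => x.elim0⟩
  refine rel_toPomset_iff.trans ⟨?_, ?_⟩
  · rintro ⟨l, -, rfl⟩
    exact relabel_empty l
  · rintro rfl
    exact ⟨fun x => x.elim0, fun x => x.elim0, relabel_empty _⟩

theorem rel_single_iff {a : A} {V : Pomset B} :
    Rel P (single a) V ↔ ∃ b, P a b ∧ V = single b := by
  refine rel_toPomset_iff.trans ⟨?_, ?_⟩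
  · rintro ⟨l, hl, rfl⟩
    exact ⟨l PUnit.unit, hl PUnit.unit, rfl⟩
  · rintro ⟨b, hb, rfl⟩
    exact ⟨fun _ => b, fun _ => hb, rfl⟩

theorem toPomset_relabel_seqL (u v : LPoset A) (l : (u.seqL v).carrier → B) :
    ((u.seqL v).relabel l).toPomset =
      (u.relabel fun x => l (toLex (.inl x))).toPomset.seq
        (v.relabel fun x => l (toLex (.inr x))).toPomset :=
  Quotient.sound ⟨OrderIso.refl (u.carrier ⊕ₗ v.carrier), by rintro (x | x) <;> rfl⟩

theorem toPomset_relabel_parL (u v : LPoset A) (l : (u.parL v).carrier → B) :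
    ((u.parL v).relabel l).toPomset =
      (u.relabel fun x => l (.inl x)).toPomset.par (v.relabel fun x => l (.inr x)).toPomset :=
  Quotient.sound ⟨OrderIso.refl (u.carrier ⊕ v.carrier), by rintro (x | x) <;> rfl⟩

theorem rel_seq_iff {U V : Pomset A} {W : Pomset B} :
    Rel P (U.seq V) W ↔ ∃ U' V', Rel P U U' ∧ Rel P V V' ∧ W = U'.seq V' := by
  induction U with | mk u
  induction V with | mk v
  refine rel_toPomset_iff (u := u.seqL v) |>.trans ⟨?_, ?_⟩
  · rintro ⟨l, hl, rfl⟩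
    exact ⟨_, _, rel_toPomset_iff.2 ⟨_, fun x => hl (toLex (.inl x)), rfl⟩,
      rel_toPomset_iff.2 ⟨_, fun x => hl (toLex (.inr x)), rfl⟩, toPomset_relabel_seqL u v l⟩
  · rintro ⟨U', V', hU, hV, rfl⟩
    obtain ⟨l, hl, rfl⟩ := rel_toPomset_iff.1 hU
    obtain ⟨m, hm, rfl⟩ := rel_toPomset_iff.1 hV
    exact ⟨fun x => Sum.elim l m (ofLex x), Sum.rec hl hm, toPomset_relabel_seqL u v _⟩

theorem rel_par_iff {U V : Pomset A} {W : Pomset B} :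
    Rel P (U.par V) W ↔ ∃ U' V', Rel P U U' ∧ Rel P V V' ∧ W = U'.par V' := by
  induction U with | mk u
  induction V with | mk v
  refine rel_toPomset_iff (u := u.parL v) |>.trans ⟨?_, ?_⟩
  · rintro ⟨l, hl, rfl⟩
    exact ⟨_, _, rel_toPomset_iff.2 ⟨_, fun x => hl (.inl x), rfl⟩,
      rel_toPomset_iff.2 ⟨_, fun x => hl (.inr x), rfl⟩, toPomset_relabel_parL u v l⟩
  · rintro ⟨U', V', hU, hV, rfl⟩
    obtain ⟨l, hl, rfl⟩ := rel_toPomset_iff.1 hU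
    obtain ⟨m, hm, rfl⟩ := rel_toPomset_iff.1 hV
    exact ⟨Sum.elim l m, Sum.rec hl hm, toPomset_relabel_parL u v _⟩

theorem Rel.isSP {U : Pomset A} {V : Pomset B} (h : Rel P U V) (hU : U.IsSP) : V.IsSP := by
  induction hU generalizing V with
  | empty => exact rel_empty_iff.1 h ▸ .empty
  | single a =>
    obtain ⟨b, -, rfl⟩ := rel_single_iff.1 h
    exact .single b
  | seq _ _ ihU ihV =>
    obtain ⟨U', V', hU, hV, rfl⟩ := rel_seq_iff.1 h
    exact .seq (ihU hU) (ihV hV)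
  | par _ _ ihU ihV =>
    obtain ⟨U', V', hU, hV, rfl⟩ := rel_par_iff.1 h
    exact .par (ihU hU) (ihV hV)

end Pomset

theorem optionRel_eq_none_iff {x : Option A} {y : Option B} (h : Option.Rel P x y) :
    y = none ↔ x = none := by
  cases h <;> simp

theorem LPoset.uniqueStarL_relabel {c : LPoset (Option A)} {m : c.carrier → Option B}
    (hm : ∀ x, m x = none ↔ c.lab x = none) : (c.relabel m).uniqueStarL ↔ c.uniqueStarL :=
  existsUnique_congr hm

theorem Pomset.Rel.isSPCtx {C : Pomset (Option A)} {D : Pomset (Option B)}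
    (h : Rel (Option.Rel P) C D) (hC : C.IsSPCtx) : D.IsSPCtx := by
  refine ⟨?_, h.isSP hC.2⟩
  obtain ⟨c, m, hm, rfl, rfl⟩ := h
  exact (LPoset.uniqueStarL_relabel fun x => optionRel_eq_none_iff (hm x)).2 hC.1

theorem Pomset.ins_relabel (c : LPoset (Option A)) (u : LPoset A) (m : c.carrier → Option B)
    (hm : ∀ x, m x = none ↔ c.lab x = none) (l : (c.insL u).carrier → B)
    (hl : ∀ x, m x.1 = some (l (.inl x))) :
    (c.relabel m).toPomset.ins (u.relabel fun x => l (.inr x)).toPomset =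
      ((c.insL u).relabel l).toPomset := by
  have star_iff (Q : c.carrier → Prop) :
      ((c.relabel m).uniqueStarL ∧ ∃ s, m s = none ∧ Q s) ↔
        c.uniqueStarL ∧ ∃ s, c.lab s = none ∧ Q s := by
    rw [LPoset.uniqueStarL_relabel hm]
    simp only [hm]
  refine Quotient.sound ⟨{
    toEquiv := (Equiv.subtypeEquivRight fun x => (hm x).not).sumCongr (Equiv.refl u.carrier)
    map_rel_iff' := ?_ }, ?_⟩
  · rintro (x | x) (y | y)
    · exact Iff.rfl
    · exact (star_iff (x.1 ≤ ·)).symm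
    · exact (star_iff (· ≤ y.1)).symm
    · exact Iff.rfl
  · rintro (⟨x, hx⟩ | x)
    · exact Option.some_injective _ ((hl ⟨x, (hm x).not.1 hx⟩).symm.trans (Option.some_get _).symm)
    · rfl

theorem Pomset.rel_ins_iff {C : Pomset (Option A)} {U : Pomset A} {W : Pomset B} :
    Rel P (C.ins U) W ↔
      ∃ D U', Rel (Option.Rel P) C D ∧ Rel P U U' ∧ W = D.ins U' := by
  induction C with | mk c
  induction U with | mk u
  refine rel_toPomset_iff (u := c.insL u) |>.trans ⟨?_, ?_⟩
  · classical
    rintro ⟨l, hl, rfl⟩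
    let m (x : c.carrier) : Option B := if h : c.lab x = none then none else some (l (.inl ⟨x, h⟩))
    have hm (x) : Option.Rel P (c.lab x) (m x) := by
      by_cases h : c.lab x = none
      · simp only [m, dif_pos h, h, Option.Rel.none]
      · simp only [m, dif_neg h]
        rw [← Option.some_get (Option.isSome_iff_ne_none.2 h)]
        exact .some (hl (.inl ⟨x, h⟩))
    exact ⟨_, _, rel_toPomset_iff.2 ⟨m, hm, rfl⟩,
      rel_toPomset_iff.2 ⟨_, fun x => hl (.inr x), rfl⟩,
      (ins_relabel c u m (fun x => optionRel_eq_none_iff (hm x)) l fun x => dif_neg x.2).symm⟩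
  · rintro ⟨D, U', hD, hU, rfl⟩
    obtain ⟨m, hm, rfl⟩ := rel_toPomset_iff.1 hD
    obtain ⟨l, hl, rfl⟩ := rel_toPomset_iff.1 hU
    have exists_lab (x : {x // c.lab x ≠ none}) : ∃ b, m x.1 = some b :=
      Option.ne_none_iff_exists'.1 fun h => x.2 ((optionRel_eq_none_iff (hm x.1)).1 h)
    choose k hk using exists_lab
    refine ⟨Sum.elim k l, Sum.rec (fun x => ?_) hl,
      (ins_relabel c u m (fun x => optionRel_eq_none_iff (hm x)) (Sum.elim k l) hk).symm⟩
    have hx := hm x.1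
    rw [hk, ← Option.some_get (Option.isSome_iff_ne_none.2 x.2)] at hx
    cases hx with | some h => exact h

end Relabelling

/-! ### Relabelling languages and terms -/

section LangRelabel

variable {A B : Type} (P : A → B → Prop)

/-- The language of all pomsets that arise from members of `L` by relabelling along `P`. -/
def Lang.relabel (L : Lang A) : Lang B := {V | ∃ U ∈ L, Pomset.Rel P U V}

namespace Lang

variable {P}

theorem relabel_mono {L K : Lang A} (h : L ⊆ K) : relabel P L ⊆ relabel P K :=
  fun _ ⟨U, hU, hUV⟩ => ⟨U, h hU, hUV⟩

variable (P)

theorem relabel_empty : relabel P ∅ = ∅ := by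
  simp [relabel]

theorem relabel_union (L K : Lang A) : relabel P (L ∪ K) = relabel P L ∪ relabel P K := by
  ext V
  simp only [relabel, Set.mem_union, Set.mem_ofPred_eq, or_and_right, exists_or]

theorem relabel_iUnion {ι : Sort*} (L : ι → Lang A) :
    relabel P (⋃ i, L i) = ⋃ i, relabel P (L i) := by
  ext V
  simp only [relabel, Set.mem_iUnion, Set.mem_ofPred_eq]
  exact ⟨fun ⟨U, ⟨i, hU⟩, h⟩ => ⟨i, U, hU, h⟩, fun ⟨i, U, hU, h⟩ => ⟨U, ⟨i, hU⟩, h⟩⟩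

theorem relabel_singleton_empty :
    relabel P {Pomset.empty A} = {Pomset.empty B} := by
  ext V
  simp [relabel, Pomset.rel_empty_iff]

theorem relabel_singleton_single (a : A) :
    relabel P {Pomset.single a} = Pomset.single '' {b | P a b} := by
  ext V
  simp [relabel, Pomset.rel_single_iff, eq_comm]

theorem relabel_seq (L K : Lang A) :
    relabel P (seq L K) = seq (relabel P L) (relabel P K) := by
  ext W
  constructor
  · rintro ⟨_, ⟨U, hU, V, hV, rfl⟩, h⟩
    obtain ⟨U', V', hUU', hVV', rfl⟩ := Pomset.rel_seq_iff.1 h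
    exact ⟨U', ⟨U, hU, hUU'⟩, V', ⟨V, hV, hVV'⟩, rfl⟩
  · rintro ⟨U', ⟨U, hU, hUU'⟩, V', ⟨V, hV, hVV'⟩, rfl⟩
    exact ⟨_, ⟨U, hU, V, hV, rfl⟩, Pomset.rel_seq_iff.2 ⟨U', V', hUU', hVV', rfl⟩⟩

theorem relabel_par (L K : Lang A) :
    relabel P (par L K) = par (relabel P L) (relabel P K) := by
  ext W
  constructor
  · rintro ⟨_, ⟨U, hU, V, hV, rfl⟩, h⟩
    obtain ⟨U', V', hUU', hVV', rfl⟩ := Pomset.rel_par_iff.1 h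
    exact ⟨U', ⟨U, hU, hUU'⟩, V', ⟨V, hV, hVV'⟩, rfl⟩
  · rintro ⟨U', ⟨U, hU, hUU'⟩, V', ⟨V, hV, hVV'⟩, rfl⟩
    exact ⟨_, ⟨U, hU, V, hV, rfl⟩, Pomset.rel_par_iff.2 ⟨U', V', hUU', hVV', rfl⟩⟩

theorem relabel_pow (L : Lang A) (n : ℕ) : relabel P (L.pow n) = (relabel P L).pow n := by
  induction n with
  | zero => exact relabel_singleton_empty P
  | succ n ih => rw [pow, pow, relabel_seq, ih]

theorem relabel_star (L : Lang A) : relabel P L.star = (relabel P L).star := by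
  simp only [star, relabel_iUnion, relabel_pow]

end Lang

end LangRelabel

section Substitution

variable {A : Type}

/-- The relation on letters induced by a letter map `r`: `a` is related to the one-letter pomsets
of `⟦r a⟧`. -/
def letterRel (r : A → Term A) (a b : A) : Prop := Pomset.single b ∈ (r a).lang

theorem lang_rTerm {r : A → Term A} (hr : ∀ a, (r a).lang ⊆ Set.range Pomset.single)
    (e : Term A) : (rTerm r e).lang = Lang.relabel (letterRel r) e.lang := by
  induction e with
  | zero => exact (Lang.relabel_empty _).symm
  | one => exact (Lang.relabel_singleton_empty _).symm
  | var a =>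
    rw [rTerm, Term.lang, Lang.relabel_singleton_single]
    exact (Set.image_preimage_eq_of_subset (hr a)).symm
  | add e f ihe ihf => rw [rTerm, Term.lang, Term.lang, Lang.relabel_union, ihe, ihf]
  | seq e f ihe ihf => rw [rTerm, Term.lang, Term.lang, Lang.relabel_seq, ihe, ihf]
  | par e f ihe ihf => rw [rTerm, Term.lang, Term.lang, Lang.relabel_par, ihe, ihf]
  | star e ih => rw [rTerm, Term.lang, Term.lang, Lang.relabel_star, ih]

theorem congH_rTerm {H : HypSet A} {r : A → Term A} (hr : ∀ a, CongH H (.var a) (r a))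
    (e : Term A) : CongH H e (rTerm r e) := by
  induction e with
  | zero => exact .refl _
  | one => exact .refl _
  | var a => exact hr a
  | add _ _ ihe ihf => exact .addCong ihe ihf
  | seq _ _ ihe ihf => exact .seqCong ihe ihf
  | par _ _ ihe ihf => exact .parCong ihe ihf
  | star _ ih => exact .starCong ih

end Substitution

/-! ### Transporting closures -/

section Closure

variable {A B : Type} {H : HypSet A} {H' : HypSet B} {L K M : Lang A}

theorem subset_cl : L ⊆ cl H L := fun _ => closure.base

theorem cl_subset_cl (h : L ⊆ cl H K) : cl H L ⊆ cl H K := by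
  intro U hU
  induction hU with
  | base hU => exact h hU
  | step hef hC _ hU ih => exact closure.step hef hC ih hU

theorem cl_mono_hyp {H₁ H₂ : HypSet A} (h : H₁ ⊆ H₂) : cl H₁ L ⊆ cl H₂ L := by
  intro U hU
  induction hU with
  | base hU => exact closure.base hU
  | step hef hC _ hU ih => exact closure.step (h hef) hC ih hU

/-- The semantic counterpart of `≦^H`: in every series-parallel context `C`, the language `C[L]`
is contained in the `H`-closure of `C[K]`. -/
def ClosureLe (H : HypSet A) (L K : Lang A) : Prop :=
  ∀ C : Pomset (Option A), C.IsSPCtx → Ctx.img C L ⊆ cl H (Ctx.img C K)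

namespace ClosureLe

theorem of_subset (h : L ⊆ K) : ClosureLe H L K := by
  rintro C - _ ⟨U, hU, rfl⟩
  exact subset_cl ⟨U, h hU, rfl⟩

theorem of_mem {e f : Term A} (h : (e, f) ∈ H) : ClosureLe H e.lang f.lang := by
  rintro C hC _ ⟨U, hU, rfl⟩
  have hf (V) (hV : V ∈ f.lang) : C.ins V ∈ cl H (Ctx.img C f.lang) := subset_cl ⟨V, hV, rfl⟩
  exact closure.step h hC hf hU

theorem mono {H₁ H₂ : HypSet A} (hLK : ClosureLe H₁ L K) (h : H₁ ⊆ H₂) : ClosureLe H₂ L K :=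
  fun C hC => (hLK C hC).trans (cl_mono_hyp h)

theorem trans (hLK : ClosureLe H L K) (hKM : ClosureLe H K M) : ClosureLe H L M :=
  fun C hC => (hLK C hC).trans (cl_subset_cl (hKM C hC))

theorem of_forall_singleton (h : ∀ U ∈ L, ClosureLe H {U} K) : ClosureLe H L K := by
  rintro C hC _ ⟨U, hU, rfl⟩
  exact h U hU C hC ⟨U, rfl, rfl⟩

end ClosureLe

variable {P : A → B → Prop}

theorem relabel_cl_subset
    (hH : ∀ e f, (e, f) ∈ H → ClosureLe H' (Lang.relabel P e.lang) (Lang.relabel P f.lang)) :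
    Lang.relabel P (cl H L) ⊆ cl H' (Lang.relabel P L) := by
  rintro W ⟨U, hU, hUW⟩
  induction hU generalizing W with
  | base hU => exact subset_cl ⟨_, hU, hUW⟩
  | @step e f hef C hC _ U hU ih =>
    obtain ⟨D, U', hCD, hUU', rfl⟩ := Pomset.rel_ins_iff.1 hUW
    have hD : Ctx.img D (Lang.relabel P f.lang) ⊆ cl H' (Lang.relabel P L) := by
      rintro _ ⟨V', ⟨V, hV, hVV'⟩, rfl⟩
      exact ih V hV (Pomset.rel_ins_iff.2 ⟨D, V', hCD, hVV', rfl⟩)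
    exact cl_subset_cl hD (hH e f hef D (hCD.isSPCtx hC) ⟨U', ⟨U, hU, hUU'⟩, rfl⟩)

theorem cl_relabel_eq_of_cl_eq
    (hH : ∀ e f, (e, f) ∈ H → ClosureLe H' (Lang.relabel P e.lang) (Lang.relabel P f.lang))
    (h : cl H L = cl H K) : cl H' (Lang.relabel P L) = cl H' (Lang.relabel P K) := by
  have cl_relabel_subset {L K : Lang A} (h : cl H L = cl H K) :
      cl H' (Lang.relabel P L) ⊆ cl H' (Lang.relabel P K) :=
    cl_subset_cl <| calc
      Lang.relabel P L ⊆ Lang.relabel P (cl H L) := Lang.relabel_mono subset_cl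
      _ = Lang.relabel P (cl H K) := by rw [h]
      _ ⊆ cl H' (Lang.relabel P K) := relabel_cl_subset hH
  exact (cl_relabel_subset h).antisymm (cl_relabel_subset h.symm)

end Closure

theorem isReduction_rTerm {A : Type} {H H' : HypSet A} {r : A → Term A} (himp : Implies H H')
    (hequiv : ∀ a, CongH H (.var a) (r a)) (hr : ∀ a, (r a).lang ⊆ Set.range Pomset.single)
    (hH : ∀ e f, (e, f) ∈ H → ClosureLe H' (rTerm r e).lang (rTerm r f).lang) :
    IsReduction H H' (rTerm r) where
  implies := himp
  equiv := congH_rTerm hequiv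
  reflect e f h := by
    simp only [lang_rTerm hr] at hH ⊢
    exact cl_relabel_eq_of_cl_eq hH h

/-! ### Evaluation of propositional terms -/

section Evaluation

variable {Ω : Type} {B : Type*} [BooleanAlgebra B]

/-- The value of a propositional term in a Boolean algebra `B`, given the values of the primitive
observations. For `B = Bool` and a valuation `α ∈ At` this is the truth value under `α`. -/
def BATerm.eval (v : Ω → B) : BATerm Ω → B
  | .bot => ⊥
  | .top => ⊤
  | .var o => v o
  | .or p q => p.eval v ⊔ q.eval v
  | .and p q => p.eval v ⊓ q.eval v
  | .not p => (p.eval v)ᶜ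

theorem BACong.eval_eq {p q : BATerm Ω} (h : BACong p q) (v : Ω → B) : p.eval v = q.eval v := by
  induction h with
  | refl => rfl
  | symm _ ih => exact ih.symm
  | trans _ _ ih ih' => exact ih.trans ih'
  | orCong _ _ ih ih' => exact congrArg₂ (· ⊔ ·) ih ih'
  | andCong _ _ ih ih' => exact congrArg₂ (· ⊓ ·) ih ih'
  | notCong _ ih => exact congrArg (·ᶜ) ih
  | orBot => exact sup_bot_eq _
  | orComm => exact sup_comm _ _
  | orNot => exact sup_compl_eq_top
  | orAssoc => exact (sup_assoc _ _ _).symm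
  | andTop => exact inf_top_eq _
  | andComm => exact inf_comm _ _
  | andNot => exact inf_compl_eq_bot
  | andAssoc => exact (inf_assoc _ _ _).symm
  | orAndDist => exact sup_inf_left _ _ _
  | andOrDist => exact inf_sup_left _ _ _

variable {ι : Type*} [DecidableEq ι]

/-- The conjunction of the terms `f i`, for `i` in the list `l`. -/
def BATerm.conj (f : ι → BATerm Ω) (l : List ι) : BATerm Ω :=
  l.foldr (fun i => .and (f i)) .top

/-- The disjunction of the terms `f i`, for `i` in the list `l`. -/
def BATerm.disj (f : ι → BATerm Ω) (l : List ι) : BATerm Ω :=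
  l.foldr (fun i => .or (f i)) .bot

theorem BATerm.eval_conj (f : ι → BATerm Ω) (l : List ι) (v : Ω → B) :
    (conj f l).eval v = l.toFinset.inf fun i => (f i).eval v := by
  induction l with
  | nil => rfl
  | cons i l ih =>
    rw [List.toFinset_cons, Finset.inf_insert, ← ih]
    rfl

theorem BATerm.eval_disj (f : ι → BATerm Ω) (l : List ι) (v : Ω → B) :
    (disj f l).eval v = l.toFinset.sup fun i => (f i).eval v := by
  induction l with
  | nil => rfl
  | cons i l ih =>
    rw [List.toFinset_cons, Finset.sup_insert, ← ih]
    rfl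

end Evaluation

/-! ### Disjunctive normal form -/

section NormalForm

variable {Ω : Type} [Fintype Ω] {B : Type*} [BooleanAlgebra B]

theorem eval_atomTerm (α : Ω → Bool) (v : Ω → B) :
    (atomTerm α).eval v = Finset.univ.inf fun o => if α o then v o else (v o)ᶜ := by
  classical
  have eval_literal (o : Ω) :
      (if α o then BATerm.var o else .not (.var o)).eval v = if α o then v o else (v o)ᶜ :=
    apply_ite (BATerm.eval v) _ _ _
  simp_rw [← eval_literal]
  conv_rhs => rw [← Finset.toList_toFinset Finset.univ]
  exact BATerm.eval_conj _ _ v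

theorem eval_atomTerm_self (α : Ω → Bool) : (atomTerm α).eval α = true := by
  rw [eval_atomTerm]
  refine top_unique (Finset.le_inf fun o _ => ?_)
  cases h : α o <;> simp

theorem sup_eval_atomTerm [DecidableEq Ω] (v : Ω → B) :
    (Finset.univ.sup fun α : Ω → Bool => (atomTerm α).eval v) = ⊤ := by
  refine top_unique ?_
  calc
    ⊤ = Finset.univ.inf fun o => Finset.univ.sup fun b : Bool => if b then v o else (v o)ᶜ := by
      simp
    _ = (Finset.univ.pi fun _ => Finset.univ).sup fun g : ∀ o ∈ Finset.univ, Bool =>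
          Finset.univ.attach.inf fun o => if g o.1 o.2 then v o.1 else (v o.1)ᶜ := by
      rw [Finset.inf_sup]
    _ ≤ Finset.univ.sup fun α : Ω → Bool => (atomTerm α).eval v := by
      refine Finset.sup_le fun g _ => ?_
      refine le_trans ?_ (Finset.le_sup (Finset.mem_univ fun o => g o (Finset.mem_univ o)))
      rw [eval_atomTerm]
      exact Finset.le_inf fun o _ => Finset.inf_le (Finset.mem_attach _ ⟨o, Finset.mem_univ o⟩)

theorem eval_atomTerm_inf_eval (α : Ω → Bool) (p : BATerm Ω) (v : Ω → B) :
    (atomTerm α).eval v ⊓ p.eval v = if p.eval α then (atomTerm α).eval v else ⊥ := by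
  induction p with
  | bot => simp [BATerm.eval]
  | top => simp [BATerm.eval]
  | var o =>
    have hle : (atomTerm α).eval v ≤ if α o then v o else (v o)ᶜ := by
      rw [eval_atomTerm]
      exact Finset.inf_le (Finset.mem_univ o)
    cases h : α o
    · simpa [BATerm.eval, h, ← disjoint_iff, le_compl_iff_disjoint_right] using hle
    · simpa [BATerm.eval, h] using hle
  | or p q ihp ihq =>
    rw [BATerm.eval, BATerm.eval, inf_sup_left, ihp, ihq]
    cases p.eval α <;> cases q.eval α <;> simp
  | and p q ihp ihq =>
    rw [BATerm.eval, BATerm.eval, inf_inf_distrib_left, ihp, ihq]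
    cases p.eval α <;> cases q.eval α <;> simp
  | not p ih =>
    rw [BATerm.eval, BATerm.eval, ← sdiff_eq, ← sdiff_inf_self_left, ih]
    cases p.eval α <;> simp

theorem eval_eq_sup_eval_atomTerm [DecidableEq Ω] (p : BATerm Ω) (v : Ω → B) :
    p.eval v = (Finset.univ.filter fun α => p.eval α = true).sup fun α => (atomTerm α).eval v :=
  calc
    p.eval v = (Finset.univ.sup fun α : Ω → Bool => (atomTerm α).eval v) ⊓ p.eval v := by
      rw [sup_eval_atomTerm, top_inf_eq]
    _ = Finset.univ.sup fun α : Ω → Bool => if p.eval α then (atomTerm α).eval v else ⊥ := by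
      simp only [Finset.sup_inf_distrib_right, eval_atomTerm_inf_eval]
    _ = (Finset.univ.filter fun α => p.eval α = true).sup fun α => (atomTerm α).eval v := by
      rw [Finset.sup_ite, Finset.sup_bot, sup_bot_eq]

end NormalForm

/-! ### The Lindenbaum algebra -/

namespace BACong

variable {Ω : Type} (p q : BATerm Ω)

theorem orTop : BACong (.or p .top) .top :=
  (andTop _).symm.trans <| (andCong (refl _) (orNot p).symm).trans <|
    (orAndDist _ _ _).symm.trans <|
      (orCong (refl _) ((andComm _ _).trans (andTop _))).trans (orNot p)

theorem andBot : BACong (.and p .bot) .bot :=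
  (orBot _).symm.trans <| (orCong (refl _) (andNot p).symm).trans <|
    (andOrDist _ _ _).symm.trans <|
      (andCong (refl _) ((orComm _ _).trans (orBot _))).trans (andNot p)

theorem orAbsorb : BACong (.or p (.and p q)) p :=
  (orCong (andTop p).symm (refl _)).trans <| (andOrDist _ _ _).symm.trans <|
    (andCong (refl _) ((orComm _ _).trans (orTop q))).trans (andTop p)

theorem andAbsorb : BACong (.and p (.or p q)) p :=
  (andCong (orBot p).symm (refl _)).trans <| (orAndDist _ _ _).symm.trans <|
    (orCong (refl _) ((andComm _ _).trans (andBot q))).trans (orBot p)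

end BACong

/-- The Lindenbaum algebra: propositional terms up to provable equivalence. -/
def Lindenbaum (Ω : Type) : Type :=
  Quotient (⟨BACong, .refl, .symm, .trans⟩ : Setoid (BATerm Ω))

namespace Lindenbaum

variable {Ω : Type}

/-- The class of a propositional term in the Lindenbaum algebra. -/
def mk (p : BATerm Ω) : Lindenbaum Ω := Quotient.mk _ p

theorem mk_eq_mk_iff {p q : BATerm Ω} : mk p = mk q ↔ BACong p q := Quotient.eq

instance : Max (Lindenbaum Ω) := ⟨Quotient.map₂ .or fun _ _ hp _ _ hq => .orCong hp hq⟩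

instance : Min (Lindenbaum Ω) := ⟨Quotient.map₂ .and fun _ _ hp _ _ hq => .andCong hp hq⟩

instance : Compl (Lindenbaum Ω) := ⟨Quotient.map .not fun _ _ => .notCong⟩

instance : Top (Lindenbaum Ω) := ⟨mk .top⟩

instance : Bot (Lindenbaum Ω) := ⟨mk .bot⟩

instance : Lattice (Lindenbaum Ω) :=
  Lattice.mk'
    (by rintro ⟨p⟩ ⟨q⟩; exact mk_eq_mk_iff.2 (.orComm p q))
    (by rintro ⟨p⟩ ⟨q⟩ ⟨r⟩; exact mk_eq_mk_iff.2 (.symm (.orAssoc p q r)))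
    (by rintro ⟨p⟩ ⟨q⟩; exact mk_eq_mk_iff.2 (.andComm p q))
    (by rintro ⟨p⟩ ⟨q⟩ ⟨r⟩; exact mk_eq_mk_iff.2 (.symm (.andAssoc p q r)))
    (by rintro ⟨p⟩ ⟨q⟩; exact mk_eq_mk_iff.2 (.orAbsorb p q))
    (by rintro ⟨p⟩ ⟨q⟩; exact mk_eq_mk_iff.2 (.andAbsorb p q))

instance : BooleanAlgebra (Lindenbaum Ω) where
  le_sup_inf := by rintro ⟨p⟩ ⟨q⟩ ⟨r⟩; exact (mk_eq_mk_iff.2 (.orAndDist p q r)).ge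
  inf_compl_le_bot := by rintro ⟨p⟩; exact (mk_eq_mk_iff.2 (.andNot p)).le
  top_le_sup_compl := by rintro ⟨p⟩; exact (mk_eq_mk_iff.2 (.orNot p)).ge
  le_top := by rintro ⟨p⟩; exact sup_eq_right.1 (mk_eq_mk_iff.2 (.orTop p))
  bot_le := by rintro ⟨p⟩; exact sup_eq_left.1 (mk_eq_mk_iff.2 (.orBot p))

theorem mk_eq_eval (p : BATerm Ω) : mk p = p.eval fun o => mk (.var o) := by
  induction p with
  | bot | top | var => rfl
  | or _ _ ihp ihq => exact congrArg₂ (· ⊔ ·) ihp ihq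
  | and _ _ ihp ihq => exact congrArg₂ (· ⊓ ·) ihp ihq
  | not _ ih => exact congrArg (·ᶜ) ih

end Lindenbaum

theorem baCong_iff_eval_eq {Ω : Type} {p q : BATerm Ω} :
    BACong p q ↔ ∀ v : Ω → Lindenbaum Ω, p.eval v = q.eval v := by
  refine ⟨BACong.eval_eq, fun h => ?_⟩
  rw [← Lindenbaum.mk_eq_mk_iff, Lindenbaum.mk_eq_eval, Lindenbaum.mk_eq_eval, h]

section Atoms

variable {Ω : Type} [Fintype Ω]

theorem leBA_atomTerm_iff {α : Ω → Bool} {p : BATerm Ω} :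
    leBA (atomTerm α) p ↔ p.eval α = true := by
  constructor
  · intro h
    simpa [BATerm.eval, eval_atomTerm_self] using (h.eval_eq α).symm
  · intro h
    refine baCong_iff_eval_eq.2 fun v => sup_eq_right.2 (inf_eq_left.1 ?_)
    rw [eval_atomTerm_inf_eval, if_pos h]

theorem baCong_disj_atomTerm {p : BATerm Ω} {l : List (Ω → Bool)}
    (hl : ∀ α, α ∈ l ↔ p.eval α = true) : BACong p (.disj atomTerm l) := by
  classical
  have toFinset_eq : l.toFinset = Finset.univ.filter fun α => p.eval α = true := by
    ext α
    simp [hl]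
  refine baCong_iff_eval_eq.2 fun v => ?_
  rw [BATerm.eval_disj, toFinset_eq, ← eval_eq_sup_eval_atomTerm]

end Atoms

/-! ### The normal form of an observation as a letter map -/

section Observations

variable {S Ω : Type}

/-- The sum of the terms `f i`, for `i` in the list `l`. -/
def Term.sum {ι : Type*} {A : Type} (f : ι → Term A) (l : List ι) : Term A :=
  l.foldr (fun i => .add (f i)) .zero

theorem Term.lang_sum {ι : Type*} {A : Type} (f : ι → Term A) (l : List ι) :
    (Term.sum f l).lang = ⋃ i ∈ l, (f i).lang := by
  induction l with
  | nil => simp [Term.sum, Term.lang]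
  | cons i l ih => simp [← ih, Term.sum, Term.lang]

theorem CongH.of_mem_of_mem {A : Type} {H : HypSet A} {e f : Term A} (hef : (e, f) ∈ H)
    (hfe : (f, e) ∈ H) : CongH H e f :=
  (CongH.hyp hfe).symm.trans ((CongH.addComm _ _).trans (CongH.hyp hef))

theorem congH_obsHyp_of_baCong {p q : BATerm Ω} (h : BACong p q) :
    CongH (obsHyp S Ω) (.var (.inr p)) (.var (.inr q)) :=
  .of_mem_of_mem (.inl (.inl (.inl ⟨p, q, h, rfl⟩))) (.inl (.inl (.inl ⟨q, p, h.symm, rfl⟩)))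

theorem congH_obsHyp_disj {ι : Type*} (f : ι → BATerm Ω) (l : List ι) :
    CongH (obsHyp S Ω) (.var (.inr (.disj f l))) (.sum (fun i => .var (.inr (f i))) l) := by
  induction l with
  | nil => exact .of_mem_of_mem (.inr (.inl (.inr rfl))) (.inr (.inl (.inl rfl)))
  | cons i l ih =>
    have congH_or : CongH (obsHyp S Ω) (.var (.inr (.or (f i) (.disj f l))))
        (.add (.var (.inr (f i))) (.var (.inr (.disj f l)))) :=
      .of_mem_of_mem (.inr (.inr ⟨_, _, .inr rfl⟩)) (.inr (.inr ⟨_, _, .inl rfl⟩))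
    exact congH_or.trans (.addCong (.refl _) ih)

variable [Fintype Ω]

theorem obsHyp_implies_exch_union_contr'Hyp :
    Implies (obsHyp S Ω) (exch (OLet S Ω) ∪ contr'Hyp S Ω) := by
  rintro _ (⟨e, f, g, h, rfl⟩ | ⟨α, rfl⟩)
  · exact .hyp (.inl (.inr ⟨e, f, g, h, rfl⟩))
  · have congH_and_self : CongH (obsHyp S Ω) (.var (.inr (atomTerm α)))
        (.var (.inr (.and (atomTerm α) (atomTerm α)))) :=
      congH_obsHyp_of_baCong (baCong_iff_eval_eq.2 fun _ => (inf_idem _).symm)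
    exact (CongH.addCong congH_and_self (.refl _)).trans
      (.hyp (.inl (.inl (.inr ⟨_, _, rfl⟩))))

variable [DecidableEq Ω]

-- An existential, so that the classical decidability instance inside `obsR` stays hidden.
theorem exists_obsR_inr_eq_sum (p : BATerm Ω) :
    ∃ l : List (Ω → Bool), (∀ α, α ∈ l ↔ p.eval α = true) ∧
      obsR S Ω (.inr p) = .sum (fun α => .var (.inr (atomTerm α))) l :=
  ⟨_, fun α => by simp [leBA_atomTerm_iff], rfl⟩

theorem congH_obsR (a : OLet S Ω) : CongH (obsHyp S Ω) (.var a) (obsR S Ω a) := by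
  rcases a with a | p
  · exact .refl _
  · obtain ⟨l, hl, heq⟩ := exists_obsR_inr_eq_sum (S := S) p
    rw [heq]
    exact (congH_obsHyp_of_baCong (baCong_disj_atomTerm hl)).trans (congH_obsHyp_disj _ l)

theorem lang_obsR_inr (p : BATerm Ω) :
    (obsR S Ω (.inr p)).lang =
      (fun α => Pomset.single (.inr (atomTerm α))) '' {α | p.eval α = true} := by
  obtain ⟨l, hl, heq⟩ := exists_obsR_inr_eq_sum (S := S) p
  simp only [heq, Term.lang_sum, Term.lang, hl, Set.image_eq_iUnion, Set.mem_ofPred_eq]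

theorem lang_obsR_subset_range (a : OLet S Ω) :
    (obsR S Ω a).lang ⊆ Set.range Pomset.single := by
  rcases a with a | p
  · rintro _ rfl
    exact ⟨_, rfl⟩
  · rw [lang_obsR_inr]
    rintro _ ⟨α, -, rfl⟩
    exact ⟨_, rfl⟩

/-! ### Preservation of the hypotheses -/

variable {H : HypSet (OLet S Ω)} {e f : Term (OLet S Ω)}

theorem closureLe_rTerm_of_mem_boolHyp (hef : (e, f) ∈ boolHyp S Ω) :
    ClosureLe H (rTerm (obsR S Ω) e).lang (rTerm (obsR S Ω) f).lang := by
  obtain ⟨p, q, hpq, heq⟩ := hef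
  obtain ⟨rfl, rfl⟩ := Prod.mk.inj heq
  refine .of_subset (subset_of_eq ?_)
  simp only [rTerm, lang_obsR_inr, hpq.eval_eq]

theorem closureLe_rTerm_of_mem_contrHyp (hef : (e, f) ∈ contrHyp S Ω) :
    ClosureLe (contr'Hyp S Ω) (rTerm (obsR S Ω) e).lang (rTerm (obsR S Ω) f).lang := by
  obtain ⟨p, q, heq⟩ := hef
  obtain ⟨rfl, rfl⟩ := Prod.mk.inj heq
  refine .of_forall_singleton fun U hU => ?_
  rw [rTerm, lang_obsR_inr] at hU
  obtain ⟨α, hα, rfl⟩ := hU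
  obtain ⟨hp, hq⟩ : p.eval α = true ∧ q.eval α = true := by simpa [BATerm.eval] using hα
  refine (ClosureLe.of_mem (H := contr'Hyp S Ω) ⟨α, rfl⟩).trans (.of_subset ?_)
  rintro _ ⟨_, rfl, _, rfl, rfl⟩
  rw [rTerm, rTerm, rTerm, Term.lang, lang_obsR_inr, lang_obsR_inr]
  exact ⟨_, ⟨α, hp, rfl⟩, _, ⟨α, hq, rfl⟩, rfl⟩

theorem closureLe_rTerm_of_mem_exch (hef : (e, f) ∈ exch (OLet S Ω)) :
    ClosureLe (exch (OLet S Ω)) (rTerm (obsR S Ω) e).lang (rTerm (obsR S Ω) f).lang := by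
  obtain ⟨_, _, _, _, heq⟩ := hef
  obtain ⟨rfl, rfl⟩ := Prod.mk.inj heq
  exact .of_mem ⟨_, _, _, _, rfl⟩

theorem lang_rTerm_obsR_bot : (rTerm (obsR S Ω) (.var (.inr .bot))).lang = ∅ := by
  simp [rTerm, lang_obsR_inr, BATerm.eval]

theorem lang_rTerm_obsR_or (p q : BATerm Ω) :
    (rTerm (obsR S Ω) (.var (.inr (.or p q)))).lang =
      (rTerm (obsR S Ω) (.add (.var (.inr p)) (.var (.inr q)))).lang := by
  simp only [rTerm, Term.lang, lang_obsR_inr, ← Set.image_union]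
  congr 1
  ext α
  simp [BATerm.eval]

theorem closureLe_rTerm_of_mem_glueHyp (hef : (e, f) ∈ glueHyp S Ω) :
    ClosureLe H (rTerm (obsR S Ω) e).lang (rTerm (obsR S Ω) f).lang := by
  refine .of_subset (subset_of_eq ?_)
  rcases hef with (heq | heq) | ⟨p, q, heq | heq⟩ <;> obtain ⟨rfl, rfl⟩ := Prod.mk.inj heq
  · exact lang_rTerm_obsR_bot.symm
  · exact lang_rTerm_obsR_bot
  · exact (lang_rTerm_obsR_or p q).symm
  · exact lang_rTerm_obsR_or p q

theorem closureLe_rTerm_of_mem_obsHyp (hef : (e, f) ∈ obsHyp S Ω) :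
    ClosureLe (exch (OLet S Ω) ∪ contr'Hyp S Ω)
      (rTerm (obsR S Ω) e).lang (rTerm (obsR S Ω) f).lang := by
  rcases hef with ((hbool | hcontr) | hexch) | hglue
  · exact closureLe_rTerm_of_mem_boolHyp hbool
  · exact (closureLe_rTerm_of_mem_contrHyp hcontr).mono Set.subset_union_right
  · exact (closureLe_rTerm_of_mem_exch hexch).mono Set.subset_union_left
  · exact closureLe_rTerm_of_mem_glueHyp hglue

end Observations

/-- **`obs` reduces to `exch ∪ contr'`**: the homomorphic extension of the letter map
`obsR` is a reduction from `obs` to `exch ∪ contr'`. -/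
theorem obs_reduces_to_exch_contr' (S Ω : Type) [Fintype Ω] [DecidableEq Ω] :
    IsReduction (obsHyp S Ω) (exch (OLet S Ω) ∪ contr'Hyp S Ω) (rTerm (obsR S Ω)) :=
  isReduction_rTerm obsHyp_implies_exch_union_contr'Hyp congH_obsR lang_obsR_subset_range fun _ _ =>
    closureLe_rTerm_of_mem_obsHyp

end CKAH
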